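/- arXiv:1401.3026 — 2 statements merged into one kernel-verified Lean document; each statement's English description precedes it below -/
import Mathlib

section
/- Let n ≥ 1, let K ⊆ ℝⁿ be a proper cone, and for M ∈ ℝ^{n×n} write S_M := {A ∈ ℝ^{n×n} : A − M leaves K invariant}. Let μ be a Borel probability measure on ℝ^{n×n} that is absolutely continuous with respect to Lebesgue measure, let M ∈ ℝ^{n×n}, and let {M_k}_{k≥1} ⊆ ℝ^{n×n} be a sequence converging to M. Then lim_{k→∞} μ(S_M ∖ S_{M_k}) = 0 and lim_{k→∞} μ(S_{M_k} ∖ S_M) = 0. -/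
open MeasureTheory Filter Topology
open scoped ENNReal RealInnerProductSpace

noncomputable section

/-- The space of real `n × n` matrices. -/
abbrev Mat (n : ℕ) := Matrix (Fin n) (Fin n) ℝ

/-- Euclidean space `ℝⁿ`. -/
abbrev EucSp (n : ℕ) := EuclideanSpace ℝ (Fin n)

/-- The (Borel = product) measurable structure on `n × n` real matrices. -/
instance matMeasurableSpace (n : ℕ) : MeasurableSpace (Mat n) :=
  inferInstanceAs (MeasurableSpace (Fin n → Fin n → ℝ))

/-- Lebesgue measure on the space of `n × n` real matrices `≅ ℝ^{n²}`. -/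
def matLebesgue (n : ℕ) : Measure (Mat n) :=
  (inferInstance : MeasureSpace (Fin n → Fin n → ℝ)).volume

/-- The operator norm (maximal singular value) of a real square matrix, induced by the
Euclidean norm. -/
def opNorm {m : ℕ} (A : Matrix (Fin m) (Fin m) ℝ) : ℝ :=
  ‖LinearMap.toContinuousLinearMap (Matrix.toEuclideanLin A)‖

/-- The product `A_k ⋯ A_1` of the matrices `f 0 = A_1, …, f (k-1) = A_k` (decreasing order of
indices). -/
def prodRev {m k : ℕ} (f : Fin k → Matrix (Fin m) (Fin m) ℝ) : Matrix (Fin m) (Fin m) ℝ :=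
  ((List.ofFn f).reverse).prod

/-- The joint spectral radius of a set of matrices:
`ρ̂(M) = limsup_{k→∞} sup_{A₁,…,A_k ∈ M} ‖A_k ⋯ A₁‖^(1/k)`. -/
def jsr {m : ℕ} (M : Set (Matrix (Fin m) (Fin m) ℝ)) : ℝ :=
  limsup (fun k : ℕ =>
    sSup {x : ℝ | ∃ f : Fin k → Matrix (Fin m) (Fin m) ℝ,
      (∀ i, f i ∈ M) ∧ x = opNorm (prodRev f)} ^ ((1 : ℝ) / k)) atTop

/-- `E[‖A_k ⋯ A₁‖^p]` where `A₁, …, A_k` are i.i.d. with law `μ`. -/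
def kExpNorm {m : ℕ} (μ : Measure (Mat m)) (p k : ℕ) : ℝ :=
  ∫ f : Fin k → Mat m, opNorm (prodRev f) ^ p ∂(Measure.pi fun _ => μ)

/-- The `L^p`-norm joint spectral radius (`p`-radius) of a probability distribution `μ`:
`ρ_{p,μ} = lim_{k→∞} (E[‖A_k ⋯ A₁‖^p])^{1/(pk)}`; since this limit exists for distributions
with bounded support, it coincides with the `limsup` used here. -/
def pRadius {m : ℕ} (μ : Measure (Mat m)) (p : ℕ) : ℝ :=
  limsup (fun k : ℕ => kExpNorm μ p k ^ (1 / (p * k : ℝ))) atTop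

/-- The (topological) support of a measure on matrices. -/
def msupport {m : ℕ} (μ : Measure (Mat m)) : Set (Mat m) :=
  {A | ∀ ε : ℝ, 0 < ε → μ {B | opNorm (B - A) < ε} ≠ 0}

/-- `μ` has bounded support. -/
def HasBoundedSupport {m : ℕ} (μ : Measure (Mat m)) : Prop :=
  ∃ C : ℝ, ∀ A ∈ msupport μ, opNorm A ≤ C

/-- A proper cone of `ℝⁿ`: a closed convex pointed cone with nonempty interior. -/
structure IsProperCone {m : ℕ} (K : Set (EucSp m)) : Prop where
  isClosed : IsClosed K
  convex : Convex ℝ K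
  smul_mem : ∀ c : ℝ, 0 ≤ c → ∀ x ∈ K, c • x ∈ K
  pointed : ∀ x ∈ K, -x ∈ K → x = 0
  solid : (interior K).Nonempty

/-- A matrix `A` leaves a cone `K` invariant: `A K ⊆ K`. -/
def LeavesInv {m : ℕ} (A : Matrix (Fin m) (Fin m) ℝ) (K : Set (EucSp m)) : Prop :=
  ∀ x ∈ K, Matrix.toEuclideanLin A x ∈ K

/-- A set of matrices leaves a cone invariant if each of its members does. -/
def SetLeavesInv {m : ℕ} (S : Set (Matrix (Fin m) (Fin m) ℝ)) (K : Set (EucSp m)) : Prop :=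
  ∀ A ∈ S, LeavesInv A K

/-- `π(K)`: the set of matrices leaving the cone `K` invariant. -/
def piCone {m : ℕ} (K : Set (EucSp m)) : Set (Mat m) := {A | LeavesInv A K}

/-- Distance (valued in `ℝ≥0∞`, with `d(A, ∅) = ∞`) from a matrix to a set of matrices, in the
operator norm. -/
def edistSet {m : ℕ} (A : Mat m) (S : Set (Mat m)) : ℝ≥0∞ :=
  ⨅ B ∈ S, ENNReal.ofReal (opNorm (A - B))

/-- Hausdorff distance between two sets of matrices (operator norm, valued in `ℝ≥0∞`). -/
def hausdorffDistE {m : ℕ} (S T : Set (Mat m)) : ℝ≥0∞ :=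
  max (⨆ A ∈ S, edistSet A T) (⨆ B ∈ T, edistSet B S)

/-- `S_M = {A : A − M leaves K invariant}`, i.e. `{A : A ≥^K M}`. -/
def matSSet {m : ℕ} (K : Set (EucSp m)) (M : Mat m) : Set (Mat m) :=
  {A | LeavesInv (A - M) K}

/-- `π_r = {M ∈ π(K) : d(M, ∂π(K)) ≥ r}`. -/
def piConeR {m : ℕ} (K : Set (EucSp m)) (r : ℝ) : Set (Mat m) :=
  {M | M ∈ piCone K ∧ ENNReal.ofReal r ≤ edistSet M (frontier (piCone K))}

/-- `M_r = (π_r ∩ supp μ_c) ∪ supp μ_s`. -/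
def MrSet {m : ℕ} (K : Set (EucSp m)) (μc μs : Measure (Mat m)) (r : ℝ) : Set (Mat m) :=
  (piConeR K r ∩ msupport μc) ∪ msupport μs

/-- The measure `ν` is zero or a finite linear combination (with positive coefficients) of
Dirac measures. -/
def IsFiniteDiracComb {m : ℕ} (ν : Measure (Mat m)) : Prop :=
  ν = 0 ∨ ∃ (N : ℕ) (w : Fin N → ℝ) (Ms : Fin N → Mat m),
    (∀ i, 0 < w i) ∧ ν = ∑ i, ENNReal.ofReal (w i) • Measure.dirac (Ms i)

/-- The `p`-th Kronecker power of a square matrix (with `A^{⊗0} = 1`, `A^{⊗(p+1)} = A^{⊗p} ⊗ A`). -/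
def kronPow {m : ℕ} (A : Matrix (Fin m) (Fin m) ℝ) :
    (p : ℕ) → Matrix (Fin (m ^ p)) (Fin (m ^ p)) ℝ
  | 0 => 1
  | p + 1 =>
    Matrix.reindex (finProdFinEquiv.trans (finCongr (pow_succ m p).symm))
      (finProdFinEquiv.trans (finCongr (pow_succ m p).symm))
      (Matrix.kroneckerMap (· * ·) (kronPow A p) A)

/-- The `q`-th Kronecker power of a vector. -/
def vecKronPow {m : ℕ} (x : EucSp m) : (q : ℕ) → EucSp (m ^ q)
  | 0 => WithLp.toLp 2 fun _ => 1
  | q + 1 => WithLp.toLp 2 fun i =>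
      vecKronPow x q (finProdFinEquiv.symm (finCongr (pow_succ m q) i)).1 *
        x (finProdFinEquiv.symm (finCongr (pow_succ m q) i)).2

/-- The spectral radius of a real square matrix: the largest modulus of a complex eigenvalue. -/
def specRad {m : ℕ} (A : Matrix (Fin m) (Fin m) ℝ) : ℝ :=
  sSup ((fun z : ℂ => ‖z‖) '' spectrum ℂ (A.map Complex.ofReal))

/-- The entrywise expectation `E[A^{⊗p}]` of the `p`-th Kronecker power under `μ`. -/
def kronExp {m : ℕ} (μ : Measure (Mat m)) (p : ℕ) :
    Matrix (Fin (m ^ p)) (Fin (m ^ p)) ℝ :=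
  Matrix.of fun i j => ∫ A, kronPow A p i j ∂μ

/-- `V` is a stochastic Lyapunov function for `μ` of degree `p` with growth rate `γ`. -/
def IsStochLyap {m : ℕ} (μ : Measure (Mat m)) (p : ℕ) (γ : ℝ) (V : EucSp m → ℝ) : Prop :=
  (∃ C₁ : ℝ, 0 < C₁ ∧ ∃ C₂ : ℝ, 0 < C₂ ∧
    ∀ x : EucSp m, C₁ * ‖x‖ ^ p ≤ V x ∧ V x ≤ C₂ * ‖x‖ ^ p) ∧
  ∀ x : EucSp m, (∫ A, V (Matrix.toEuclideanLin A x) ∂μ) ≤ γ ^ p * V x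

/-- `ν` is a norm on `ℝ^m`. -/
def IsNormFn {m : ℕ} (ν : EucSp m → ℝ) : Prop :=
  (∀ x, 0 ≤ ν x) ∧ (∀ x, ν x = 0 ↔ x = 0) ∧
  (∀ (a : ℝ) (x : EucSp m), ν (a • x) = |a| * ν x) ∧
  (∀ x y : EucSp m, ν (x + y) ≤ ν x + ν y)

/-- `ν` is cone absolute with respect to `K`:
`ν x = inf {ν (v + w) : v, w ∈ K, x = v − w}`. -/
def IsConeAbsolute {m : ℕ} (K : Set (EucSp m)) (ν : EucSp m → ℝ) : Prop :=
  ∀ x : EucSp m, ν x = sInf {r : ℝ | ∃ v ∈ K, ∃ w ∈ K, x = v - w ∧ r = ν (v + w)}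

/-- The dual cone `K* = {f : fᵀx ≥ 0 for all x ∈ K}`. -/
def dualConeSet {m : ℕ} (K : Set (EucSp m)) : Set (EucSp m) :=
  {f | ∀ x ∈ K, 0 ≤ ⟪f, x⟫}

/-- `ν` is cone linear with respect to `K`: `ν = ⟪f, ·⟫` on `K` for some `f ∈ K*`. -/
def IsConeLinear {m : ℕ} (K : Set (EucSp m)) (ν : EucSp m → ℝ) : Prop :=
  ∃ f ∈ dualConeSet K, ∀ x ∈ K, ν x = ⟪f, x⟫

/-- The matrix norm induced by a norm `ν` on `ℝ^m`. -/
def inducedNormFn {m : ℕ} (ν : EucSp m → ℝ) (A : Matrix (Fin m) (Fin m) ℝ) : ℝ :=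
  sSup {c : ℝ | ∃ x : EucSp m, x ≠ 0 ∧ c = ν (Matrix.toEuclideanLin A x) / ν x}

open scoped symmDiff

/-!
`S_N` is the translate by `N` of `π(K)`, which is convex because `K` is, so its frontier is
Lebesgue-null and hence `μ`-null. A matrix off the frontier of `S_M` lies in the interior of `S_M`
or of its complement, so it belongs to `S_N` exactly when it belongs to `S_M` once `N` is close to
`M`; thus the indicator of `S_N ∆ S_M` tends to `0` `μ`-almost everywhere as `N → M`, and
dominated convergence gives `μ (S_N ∆ S_M) → 0`.
-/

lemma eventually_mem_iff_mem_of_notMem_frontier {X : Type*} [TopologicalSpace X] {s : Set X} {x : X}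
    (hx : x ∉ frontier s) : ∀ᶠ y in 𝓝 x, (y ∈ s ↔ x ∈ s) := by
  by_cases hxs : x ∈ s
  · have hint : x ∈ interior s := (mem_interior_iff_notMem_frontier hxs).2 hx
    filter_upwards [mem_interior_iff_mem_nhds.1 hint] with y hys
    exact iff_of_true hys hxs
  · have hint : x ∈ interior sᶜ :=
      (mem_interior_iff_notMem_frontier hxs).2 (frontier_compl s ▸ hx)
    filter_upwards [mem_interior_iff_mem_nhds.1 hint] with y hys
    exact iff_of_false hys hxs

lemma eventually_sub_mem_iff_of_notMem_frontier {G : Type*} [Sub G] [TopologicalSpace G]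
    [ContinuousSub G] {s : Set G} {a x : G} (ha : a - x ∉ frontier s) :
    ∀ᶠ y in 𝓝 x, (a - y ∈ s ↔ a - x ∈ s) :=
  (continuous_const.sub continuous_id).continuousAt.eventually
    (eventually_mem_iff_mem_of_notMem_frontier ha)

lemma tendsto_measure_zero_of_ae_eventually_notMem {α ι : Type*} [MeasurableSpace α]
    {μ : Measure α} [IsFiniteMeasure μ] {l : Filter ι} [l.IsCountablyGenerated] {s : ι → Set α}
    (hs : ∀ i, NullMeasurableSet (s i) μ) (hlim : ∀ᵐ a ∂μ, ∀ᶠ i in l, a ∉ s i) :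
    Tendsto (fun i => μ (s i)) l (𝓝 0) := by
  have hDCT : Tendsto (fun i => ∫⁻ a, (s i).indicator 1 a ∂μ) l (𝓝 (∫⁻ _, 0 ∂μ)) := by
    refine tendsto_lintegral_filter_of_dominated_convergence' 1
      (.of_forall fun i => aemeasurable_one.indicator₀ (hs i))
      (.of_forall fun i => .of_forall (Set.indicator_le_self' fun _ _ => zero_le_one)) ?_ ?_
    · simp
    · filter_upwards [hlim] with a ha
      exact tendsto_nhds_of_eventually_eq (ha.mono fun i hi => Set.indicator_of_notMem hi 1)
  simpa only [lintegral_indicator_one₀ (hs _), lintegral_zero] using hDCT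

lemma tendsto_measure_symmDiff_translate_of_null_frontier {G : Type*} [AddGroup G]
    [TopologicalSpace G] [IsTopologicalAddGroup G] [FirstCountableTopology G] [MeasurableSpace G]
    [BorelSpace G] {ν μ : Measure G} [ν.IsAddRightInvariant] [IsFiniteMeasure μ] (hμν : μ ≪ ν)
    {s : Set G} (hs : ν (frontier s) = 0) (x : G) :
    Tendsto (fun y => μ (((· - y) ⁻¹' s) ∆ ((· - x) ⁻¹' s))) (𝓝 x) (𝓝 0) := by
  have hnull (y : G) : μ ((· - y) ⁻¹' frontier s) = 0 :=
    hμν ((measurePreserving_sub_right ν y).quasiMeasurePreserving.preimage_null hs)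
  have hmeas (y : G) : NullMeasurableSet ((· - y) ⁻¹' s) μ :=
    nullMeasurableSet_of_null_frontier
      ((Homeomorph.subRight y).preimage_frontier s ▸ hnull y)
  refine tendsto_measure_zero_of_ae_eventually_notMem (fun y => (hmeas y).symmDiff (hmeas x)) ?_
  filter_upwards [measure_eq_zero_iff_ae_notMem.1 (hnull x)] with a ha
  filter_upwards [eventually_sub_mem_iff_of_notMem_frontier ha] with y hy
  simp [Set.mem_symmDiff, hy]

section Matrix

variable {n : ℕ}

instance matBorelSpace : BorelSpace (Mat n) :=
  inferInstanceAs (BorelSpace (Fin n → Fin n → ℝ))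

instance matFirstCountableTopology : FirstCountableTopology (Mat n) :=
  inferInstanceAs (FirstCountableTopology (Fin n → Fin n → ℝ))

instance matLebesgue_isAddRightInvariant : (matLebesgue n).IsAddRightInvariant :=
  inferInstanceAs (volume : Measure (Fin n → Fin n → ℝ)).IsAddRightInvariant

lemma matLebesgue_frontier_of_convex {s : Set (Mat n)} (hs : Convex ℝ s) :
    matLebesgue n (frontier s) = 0 :=
  Convex.addHaar_frontier (E := Fin n → Fin n → ℝ) volume hs

open scoped Matrix.Norms.L2Operator in
lemma opNorm_eq_l2_opNorm (A : Mat n) : opNorm A = ‖A‖ := rfl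

open scoped Matrix.Norms.L2Operator in
lemma tendsto_opNorm_sub_zero_iff {ι : Type*} {l : Filter ι} {F : ι → Mat n} {M : Mat n} :
    Tendsto (fun i => opNorm (F i - M)) l (𝓝 0) ↔ Tendsto F l (𝓝 M) := by
  simp only [opNorm_eq_l2_opNorm, tendsto_iff_norm_sub_tendsto_zero (b := M)]

lemma convex_piCone {K : Set (EucSp n)} (hK : Convex ℝ K) : Convex ℝ (piCone K) := by
  intro A hA B hB a b ha hb hab x hx
  rw [map_add, map_smul, map_smul]
  exact hK (hA x hx) (hB x hx) ha hb hab

lemma tendsto_measure_symmDiff_matSSet {K : Set (EucSp n)} (hK : Convex ℝ K) {μ : Measure (Mat n)}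
    [IsFiniteMeasure μ] (hac : μ ≪ matLebesgue n) (M : Mat n) :
    Tendsto (fun N => μ (matSSet K N ∆ matSSet K M)) (𝓝 M) (𝓝 0) :=
  tendsto_measure_symmDiff_translate_of_null_frontier hac
    (matLebesgue_frontier_of_convex (convex_piCone hK)) M

end Matrix

theorem stmt7_general {n : ℕ} {K : Set (EucSp n)} (hK : Convex ℝ K) {μ : Measure (Mat n)}
    [IsFiniteMeasure μ] (hac : μ ≪ matLebesgue n) {ι : Type*} {l : Filter ι} {M : Mat n}
    {F : ι → Mat n} (hF : Tendsto (fun i => opNorm (F i - M)) l (𝓝 0)) :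
    Tendsto (fun i => μ (matSSet K M \ matSSet K (F i))) l (𝓝 0) ∧
    Tendsto (fun i => μ (matSSet K (F i) \ matSSet K M)) l (𝓝 0) := by
  have hsymmDiff : Tendsto (fun i => μ (matSSet K (F i) ∆ matSSet K M)) l (𝓝 0) :=
    (tendsto_measure_symmDiff_matSSet hK hac M).comp (tendsto_opNorm_sub_zero_iff.1 hF)
  constructor
  · exact tendsto_of_tendsto_of_tendsto_of_le_of_le tendsto_const_nhds hsymmDiff
      (fun _ => zero_le) fun _ => measure_mono Set.subset_union_right
  · exact tendsto_of_tendsto_of_tendsto_of_le_of_le tendsto_const_nhds hsymmDiff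
      (fun _ => zero_le) fun _ => measure_mono Set.subset_union_left

/-- For `μ` absolutely continuous w.r.t. Lebesgue measure and `M_k → M` (in the
operator norm), `μ(S_M \ S_{M_k}) → 0` and `μ(S_{M_k} \ S_M) → 0`. -/
theorem stmt7 (n : ℕ) (hn : 1 ≤ n) (K : Set (EucSp n)) (hK : IsProperCone K)
    (μ : Measure (Mat n)) [IsProbabilityMeasure μ] (hac : μ ≪ matLebesgue n)
    (M : Mat n) (Mk : ℕ → Mat n)
    (hconv : Tendsto (fun k => opNorm (Mk k - M)) atTop (𝓝 0)) :
    Tendsto (fun k => μ (matSSet K M \ matSSet K (Mk k))) atTop (𝓝 0) ∧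
    Tendsto (fun k => μ (matSSet K (Mk k) \ matSSet K M)) atTop (𝓝 0) :=
  stmt7_general hK.convex hac hconv

end
end

section
/- Let n ≥ 1, let K ⊆ ℝⁿ be a proper cone, and let π = π(K) be the set of n×n matrices leaving K invariant. Let μ be a Borel probability measure on ℝ^{n×n} with bounded support whose support leaves K invariant and whose singular part μ_s with respect to Lebesgue measure is either zero or a finite linear combination of Dirac measures with positive weights; write μ = μ_c + μ_s with μ_c absolutely continuous. For r > 0 define π_r := {M ∈ π : d(M, ∂π) ≥ r} and M_r := (π_r ∩ supp μ_c) ∪ supp μ_s, and for M ∈ ℝ^{n×n} write S_M := {A ∈ ℝ^{n×n} : A − M leaves K invariant}. Let r₀ > 0 be such that M_r is nonempty for all 0 < r < r₀. Then for every r with 0 < r < r₀ and every ε > 0 there exists δ > 0 such that μ(S_{(1−ε)M}) ≥ δ for every M ∈ M_r. -/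
open MeasureTheory Filter Topology
open scoped ENNReal RealInnerProductSpace

noncomputable section

/-!
A ball of radius `r` about `M` inside a cone `C` is carried by the homothety `A ↦ (1 - ε) M + ε A`
onto the ball of radius `ε r` about `M`, which therefore lies in `{A | A - (1 - ε) M ∈ C}`. On the
support of the continuous part, whose total boundedness reduces the question to a finite net, balls
of a fixed radius have measure bounded below. On the support of the singular part the single
point `M`, which is one of finitely many atoms, already has enough mass, and it lies in
`{A | A - (1 - ε) M ∈ C}` because `M - (1 - ε) M = ε M`.
-/

section Measure

lemma eventually_forall_le_measure_ball {X : Type*} [PseudoMetricSpace X] [MeasurableSpace X]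
    {μ : Measure X} {s : Set X} (hs : TotallyBounded s) (hsμ : s ⊆ μ.support) {ρ : ℝ}
    (hρ : 0 < ρ) : ∀ᶠ δ in 𝓝 (0 : ℝ≥0∞), ∀ x ∈ s, δ ≤ μ (Metric.ball x ρ) := by
  obtain ⟨t, hts, ht, hst⟩ := Metric.finite_approx_of_totallyBounded hs (ρ / 2) (half_pos hρ)
  have hpos : ∀ y ∈ t, 0 < μ (Metric.ball y (ρ / 2)) := fun y hy =>
    (Measure.mem_support_iff_forall y).1 (hsμ (hts hy)) _ (Metric.ball_mem_nhds y (half_pos hρ))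
  filter_upwards [(eventually_all_finite ht).2 fun y hy => eventually_le_nhds (hpos y hy)]
    with δ hδ x hx
  obtain ⟨y, hy, hxy⟩ := Set.mem_iUnion₂.1 (hst hx)
  refine (hδ y hy).trans (measure_mono (Metric.ball_subset ?_))
  linarith [Metric.mem_ball'.1 hxy]

variable {X : Type*} [TopologicalSpace X] [T1Space X] [HereditarilyLindelofSpace X]
  [MeasurableSpace X] {μ : Measure X}

lemma measure_singleton_pos_of_finite_support (hμ : μ.support.Finite) {x : X}
    (hx : x ∈ μ.support) : 0 < μ {x} := by
  have hnhds : (μ.support \ {x})ᶜ ∈ 𝓝 x :=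
    hμ.sdiff.isClosed.isOpen_compl.mem_nhds fun h => h.2 rfl
  refine ((Measure.mem_support_iff_forall x).1 hx _ hnhds).trans_le (measure_mono_ae ?_)
  filter_upwards [μ.support_mem_ae] with y hy hyx
  exact by_contra fun hne => hyx ⟨hy, hne⟩

lemma eventually_forall_le_measure_singleton (hμ : μ.support.Finite) :
    ∀ᶠ δ in 𝓝 (0 : ℝ≥0∞), ∀ x ∈ μ.support, δ ≤ μ {x} :=
  (eventually_all_finite hμ).2 fun _ hx =>
    eventually_le_nhds (measure_singleton_pos_of_finite_support hμ hx)

end Measure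

lemma subset_of_isPreconnected_of_disjoint_frontier {X : Type*} [TopologicalSpace X] {s t : Set X}
    (hs : IsPreconnected s) (hst : (s ∩ t).Nonempty) (hd : Disjoint s (frontier t)) : s ⊆ t := by
  have hint : ∀ x ∈ s, x ∈ closure t → x ∈ interior t := fun x hxs hxt =>
    by_contra fun hxi => hd.notMem_of_mem_left hxs ⟨hxt, hxi⟩
  obtain ⟨x, hxs, hxt⟩ := hst
  exact (hs.subset_of_closure_inter_subset isOpen_interior
    ⟨x, hxs, hint x hxs (subset_closure hxt)⟩
    fun y hy => hint y hy.2 (closure_mono interior_subset hy.1)).trans interior_subset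

section Cone

variable {E : Type*} [SeminormedAddCommGroup E] [NormedSpace ℝ E] {C : Set E} {M : E} {r ε : ℝ}

lemma ball_subset_of_le_infEDist_frontier (hM : M ∈ C)
    (hr : ENNReal.ofReal r ≤ Metric.infEDist M (frontier C)) : Metric.ball M r ⊆ C := by
  rcases le_or_gt r 0 with hr₀ | hr₀
  · simp only [Metric.ball_eq_empty.2 hr₀, Set.empty_subset]
  refine subset_of_isPreconnected_of_disjoint_frontier (convex_ball M r).isPreconnected
    ⟨M, Metric.mem_ball_self hr₀, hM⟩ (Set.disjoint_left.2 fun A hA hAC => ?_)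
  refine (hr.trans (Metric.infEDist_le_edist_of_mem hAC)).not_gt ?_
  rw [edist_dist, ENNReal.ofReal_lt_ofReal_iff hr₀]
  exact Metric.mem_ball'.1 hA

lemma ball_mul_subset_setOf_sub_smul_mem (hC : ∀ c : ℝ, 0 < c → ∀ A ∈ C, c • A ∈ C)
    (hε : 0 < ε) (hM : Metric.ball M r ⊆ C) :
    Metric.ball M (ε * r) ⊆ {A | A - (1 - ε) • M ∈ C} := by
  intro A hA
  have hball : M + ε⁻¹ • (A - M) ∈ Metric.ball M r := by
    rwa [mem_ball_iff_norm, add_sub_cancel_left, norm_smul, norm_inv, Real.norm_of_nonneg hε.le,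
      inv_mul_lt_iff₀ hε, ← mem_ball_iff_norm]
  have heq : ε • (M + ε⁻¹ • (A - M)) = A - (1 - ε) • M := by
    rw [smul_add, smul_inv_smul₀ hε.ne']
    module
  rw [Set.mem_ofPred_eq, ← heq]
  exact hC ε hε _ (hM hball)

end Cone

theorem stmt8_general {E : Type*} [NormedAddCommGroup E] [NormedSpace ℝ E]
    [HereditarilyLindelofSpace E] [MeasurableSpace E] {C : Set E}
    (hC : ∀ c : ℝ, 0 < c → ∀ A ∈ C, c • A ∈ C) {μ μc μs : Measure E} (hdec : μ = μc + μs)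
    (hc : TotallyBounded μc.support) (hs : μs.support.Finite) (hsC : μs.support ⊆ C)
    {r ε : ℝ} (hr : 0 < r) (hε : 0 < ε) :
    ∃ δ : ℝ, 0 < δ ∧
      ∀ M ∈ {M | M ∈ C ∧ ENNReal.ofReal r ≤ Metric.infEDist M (frontier C)} ∩ μc.support ∪
          μs.support,
        ENNReal.ofReal δ ≤ μ {A | A - (1 - ε) • M ∈ C} := by
  have hcμ : μc ≤ μ := hdec ▸ Measure.le_add_right le_rfl
  have hsμ : μs ≤ μ := hdec ▸ Measure.le_add_left le_rfl
  have hcont := eventually_forall_le_measure_ball hc subset_rfl (mul_pos hε hr)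
  have hsing := eventually_forall_le_measure_singleton hs
  have hzero : Tendsto ENNReal.ofReal (𝓝[>] 0) (𝓝 0) :=
    (ENNReal.continuous_ofReal.tendsto' 0 0 ENNReal.ofReal_zero).mono_left nhdsWithin_le_nhds
  obtain ⟨δ, ⟨hδc, hδs⟩, hδ⟩ :=
    ((hzero.eventually (hcont.and hsing)).and self_mem_nhdsWithin).exists
  refine ⟨δ, hδ, ?_⟩
  rintro M (⟨⟨hMC, hMr⟩, hMc⟩ | hMs)
  · calc ENNReal.ofReal δ ≤ μc (Metric.ball M (ε * r)) := hδc M hMc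
      _ ≤ μ (Metric.ball M (ε * r)) := hcμ _
      _ ≤ μ {A | A - (1 - ε) • M ∈ C} := measure_mono <|
        ball_mul_subset_setOf_sub_smul_mem hC hε (ball_subset_of_le_infEDist_frontier hMC hMr)
  · have hmem : M - (1 - ε) • M ∈ C := by
      rw [sub_smul, one_smul, sub_sub_cancel]
      exact hC ε hε M (hsC hMs)
    calc ENNReal.ofReal δ ≤ μs {M} := hδs M hMs
      _ ≤ μ {M} := hsμ _
      _ ≤ μ {A | A - (1 - ε) • M ∈ C} := measure_mono (Set.singleton_subset_iff.2 hmem)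

section Matrix

open scoped Matrix.Norms.L2Operator

variable {m : ℕ}

lemma opNorm_eq_norm (A : Mat m) : opNorm A = ‖A‖ := rfl

lemma msupport_eq_support (μ : Measure (Mat m)) : msupport μ = μ.support := by
  ext A
  simp only [msupport, Set.mem_ofPred_eq, opNorm_eq_norm, ← pos_iff_ne_zero,
    Metric.nhds_basis_ball.mem_measureSupport, Metric.ball, dist_eq_norm]

lemma edistSet_eq_infEDist (A : Mat m) (S : Set (Mat m)) : edistSet A S = Metric.infEDist A S := by
  simp only [edistSet, Metric.infEDist, opNorm_eq_norm, edist_dist, dist_eq_norm]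

lemma MrSet_eq (K : Set (EucSp m)) (μc μs : Measure (Mat m)) (r : ℝ) :
    MrSet K μc μs r =
      {M | M ∈ piCone K ∧ ENNReal.ofReal r ≤ Metric.infEDist M (frontier (piCone K))} ∩
        μc.support ∪ μs.support := by
  simp only [MrSet, piConeR, msupport_eq_support, edistSet_eq_infEDist]

lemma HasBoundedSupport.totallyBounded_support_of_le {μ ν : Measure (Mat m)}
    (hμ : HasBoundedSupport μ) (hν : ν ≤ μ) : TotallyBounded ν.support := by
  obtain ⟨B, hB⟩ := hμ
  refine (isCompact_closedBall (0 : Mat m) B).totallyBounded.subset fun A hA => ?_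
  rw [mem_closedBall_zero_iff, ← opNorm_eq_norm]
  exact hB A (msupport_eq_support μ ▸ Measure.support_mono hν hA)

lemma SetLeavesInv.support_subset_piCone_of_le {μ ν : Measure (Mat m)} {K : Set (EucSp m)}
    (hμ : SetLeavesInv (msupport μ) K) (hν : ν ≤ μ) : ν.support ⊆ piCone K :=
  (Measure.support_mono hν).trans (msupport_eq_support μ ▸ hμ)

lemma IsFiniteDiracComb.finite_support {ν : Measure (Mat m)} (hν : IsFiniteDiracComb ν) :
    ν.support.Finite := by
  obtain rfl | ⟨N, w, Ms, -, rfl⟩ := hν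
  · simp only [Measure.support_zero, Set.finite_empty]
  have hfin := Set.finite_range Ms
  have : MeasurableSingletonClass (Mat m) :=
    inferInstanceAs (MeasurableSingletonClass (Fin m → Fin m → ℝ))
  refine hfin.subset (Measure.support_subset_of_isClosed hfin.isClosed ?_)
  simp [mem_ae_iff]

lemma IsProperCone.smul_mem_piCone {K : Set (EucSp m)} (hK : IsProperCone K) (c : ℝ) (hc : 0 < c)
    (A : Mat m) (hA : A ∈ piCone K) : c • A ∈ piCone K := fun x hx => by
  simpa only [map_smul, LinearMap.smul_apply] using hK.smul_mem c hc.le _ (hA x hx)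

end Matrix

/-- With `μ = μ_c + μ_s` as above and `supp μ` leaving `K` invariant, for every
`0 < r < r₀` (where `M_r` is nonempty for `0 < r < r₀`) and every `ε > 0` there is `δ > 0`
such that `μ(S_{(1−ε)M}) ≥ δ` for every `M ∈ M_r`. -/
theorem stmt8 (n : ℕ) (hn : 1 ≤ n) (K : Set (EucSp n)) (hK : IsProperCone K)
    (μ μc μs : Measure (Mat n)) [IsProbabilityMeasure μ] (hbdd : HasBoundedSupport μ)
    (hinv : SetLeavesInv (msupport μ) K)
    (hdec : μ = μc + μs) (hac : μc ≪ matLebesgue n) (hs : IsFiniteDiracComb μs)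
    (r₀ : ℝ) (hr₀ : 0 < r₀) (hne : ∀ r : ℝ, 0 < r → r < r₀ → (MrSet K μc μs r).Nonempty) :
    ∀ r : ℝ, 0 < r → r < r₀ → ∀ ε : ℝ, 0 < ε →
      ∃ δ : ℝ, 0 < δ ∧ ∀ M ∈ MrSet K μc μs r,
        ENNReal.ofReal δ ≤ μ (matSSet K ((1 - ε) • M)) := by
  intro r hr _ ε hε
  rw [MrSet_eq]
  exact open scoped Matrix.Norms.L2Operator in stmt8_general hK.smul_mem_piCone hdec
    (hbdd.totallyBounded_support_of_le (hdec ▸ Measure.le_add_right le_rfl)) hs.finite_support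
    (hinv.support_subset_piCone_of_le (hdec ▸ Measure.le_add_left le_rfl)) hr hε

end
end
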